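/- A slice S of the cone S₊³ of real symmetric positive semidefinite 3×3 matrices is second-order cone representable if and only if the dimension of S is at most 4, or S = S_B for some nonzero real symmetric 3×3 matrix B with det(B) = 0. -/

import Mathlib

/-!
**Slices that are not representable.** Suppose a cone `S` of psd matrices is `f (Qᵐ ∩ W)` and
contains `vₙ vₙᵀ` for infinitely many vectors `vₙ`, any three of them independent. Lift `vₙ vₙᵀ` to
`yₙ ∈ Qᵐ ∩ W`. As the proper faces of `Q` are rays, in each factor one can pass to an infinite
subfamily whose components are all zero, all on one ray, or on pairwise distinct rays
(`exists_infinite_face`); in each case the component of `yₖ` lies in the minimal face of that of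
`yᵢ + yⱼ`. Doing so in every factor gives `yᵢ + yⱼ - ε yₖ ∈ Qᵐ ∩ W` for some `ε > 0`, hence
`vᵢ vᵢᵀ + vⱼ vⱼᵀ - ε vₖ vₖᵀ` is psd. This fails on a vector orthogonal to `vᵢ, vⱼ` but not to `vₖ`
(`not_isSOCR_of_family`). A slice of dimension six is all of `S₊³`, and one of dimension five is
`S_B` for some `B ≠ 0`; if `det B ≠ 0` then `B` is indefinite, and its isotropic vectors form a
smooth conic, which provides the vectors `vₙ` (`not_isSOCR_of_nonsingular`).

**Slices that are representable.** If `dim S ≤ 4`, the orthogonal complement of `S` in the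
six-dimensional space of symmetric matrices contains a pencil, on which the determinant is a binary
cubic and so has a real zero: `S` is orthogonal to a singular `B ≠ 0` (`exists_singular_orth`).
Hence in both cases of the theorem `S` lies in `S_B` with `B ≠ 0` singular. By diagonalizing `B`
one finds two independent vectors orthogonal for every form in `S` (`exists_orth_of_singular`), so
in a suitable basis the `(0, 1)` entries vanish on `S`. A psd matrix with vanishing `(0, 1)` entry
is a sum of two psd matrices supported on the index pairs `{0, 2}` and `{1, 2}`, and the psd
`2 × 2` matrices form a copy of `Q` (`isSOCR_of_orth`).
-/

open Matrix

noncomputable section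

/-- The three-dimensional Lorentz cone `Q = {x ∈ ℝ³ : x₃ ≥ √(x₁² + x₂²)}`. -/
def lorentzCone : Set (Fin 3 → ℝ) :=
  {x | Real.sqrt (x 0 ^ 2 + x 1 ^ 2) ≤ x 2}

/-- The `m`-fold Cartesian power `Qᵐ ⊆ (ℝ³)ᵐ` of the Lorentz cone. -/
def lorentzPow (m : ℕ) : Set (Fin m → Fin 3 → ℝ) :=
  {x | ∀ i, x i ∈ lorentzCone}

/-- The cone of real symmetric positive semidefinite `k × k` matrices. -/
def psdCone (k : ℕ) : Set (Matrix (Fin k) (Fin k) ℝ) :=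
  {A | A.PosSemidef}

/-- For `B ∈ Sᵏ`, the slice `S_B = {A ∈ S₊ᵏ : tr(AB) = 0}` of the psd cone
orthogonal to `B` w.r.t. the trace scalar product. -/
def sliceOrth (k : ℕ) (B : Matrix (Fin k) (Fin k) ℝ) : Set (Matrix (Fin k) (Fin k) ℝ) :=
  {A | A.PosSemidef ∧ Matrix.trace (A * B) = 0}

/-- `S` is a slice of `S₊ᵏ`: the intersection of the psd cone with a linear
subspace of the space of symmetric matrices. -/
def IsSlice (k : ℕ) (S : Set (Matrix (Fin k) (Fin k) ℝ)) : Prop :=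
  ∃ L : Submodule ℝ (Matrix (Fin k) (Fin k) ℝ),
    (∀ A ∈ L, A.IsSymm) ∧ S = psdCone k ∩ (L : Set (Matrix (Fin k) (Fin k) ℝ))

/-- A set `S` in a real vector space is second-order cone representable (socr)
if it is the image under a linear map of the intersection of `Qᵐ` with a
linear subspace of `(ℝ³)ᵐ`, for some positive integer `m`. -/
def IsSOCR {V : Type*} [AddCommGroup V] [Module ℝ V] (S : Set V) : Prop :=
  ∃ m : ℕ, 0 < m ∧ ∃ W : Submodule ℝ (Fin m → Fin 3 → ℝ),
    ∃ f : (Fin m → Fin 3 → ℝ) →ₗ[ℝ] V,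
      S = f '' (lorentzPow m ∩ (W : Set (Fin m → Fin 3 → ℝ)))

/-- A symmetric matrix is indefinite if it is neither positive semidefinite
nor negative semidefinite. -/
def Indefinite (k : ℕ) (B : Matrix (Fin k) (Fin k) ℝ) : Prop :=
  ¬ B.PosSemidef ∧ ¬ (-B).PosSemidef

open Filter Topology

/-! ### The face argument -/

lemma mem_lorentzCone_iff (x : Fin 3 → ℝ) :
    x ∈ lorentzCone ↔ 0 ≤ x 2 ∧ x 0 ^ 2 + x 1 ^ 2 ≤ x 2 ^ 2 := by
  show Real.sqrt _ ≤ _ ↔ _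
  exact Real.sqrt_le_iff

/-- Vectors strictly inside the Lorentz cone stay in it after a small perturbation. -/
lemma eventually_sub_mem_lorentzCone {z x : Fin 3 → ℝ} (h0 : 0 < z 2)
    (h : z 0 ^ 2 + z 1 ^ 2 < z 2 ^ 2) :
    ∀ᶠ ε in 𝓝[>] (0 : ℝ), z - ε • x ∈ lorentzCone := by
  have c1 : Tendsto (fun ε : ℝ => z 2 - ε * x 2) (𝓝[>] 0) (𝓝 (z 2 - 0 * x 2)) :=
    (Continuous.tendsto (by fun_prop) 0).mono_left nhdsWithin_le_nhds
  have c2 : Tendsto (fun ε : ℝ => (z 2 - ε * x 2) ^ 2 - (z 0 - ε * x 0) ^ 2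
      - (z 1 - ε * x 1) ^ 2) (𝓝[>] 0)
      (𝓝 ((z 2 - 0 * x 2) ^ 2 - (z 0 - 0 * x 0) ^ 2 - (z 1 - 0 * x 1) ^ 2)) :=
    (Continuous.tendsto (by fun_prop) 0).mono_left nhdsWithin_le_nhds
  have e1 := c1.eventually (lt_mem_nhds (a := 0) (by simpa using h0))
  have e2 := c2.eventually (lt_mem_nhds (a := 0) (by simp; linarith))
  filter_upwards [e1, e2] with ε h1 h2
  rw [mem_lorentzCone_iff]
  simp only [Pi.sub_apply, Pi.smul_apply, smul_eq_mul]
  exact ⟨h1.le, by linarith⟩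

/-- Pigeonhole: a function on an infinite set is constant or injective on an infinite subset. -/
lemma exists_infinite_const_or_injOn {α β : Type*} {I : Set α} (hI : I.Infinite) (g : α → β) :
    ∃ J ⊆ I, J.Infinite ∧ ((∃ b, ∀ n ∈ J, g n = b) ∨ Set.InjOn g J) := by
  by_cases h : (g '' I).Finite
  · by_contra! hc
    apply hI
    have : I ⊆ ⋃ b ∈ g '' I, (I ∩ g ⁻¹' {b}) := by
      intro n hn
      simp only [Set.mem_iUnion]
      exact ⟨g n, ⟨n, hn, rfl⟩, hn, rfl⟩
    refine Set.Finite.subset (h.biUnion fun b _ => ?_) this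
    by_contra hb
    obtain ⟨n, hn, hne⟩ := (hc _ Set.inter_subset_left hb).1 b
    exact hne hn.2
  · obtain ⟨J, hJ, hb⟩ := Set.exists_subset_bijOn I g
    refine ⟨J, hJ, fun hf => h ?_, Or.inr hb.injOn⟩
    rw [← hb.image_eq]
    exact hf.image g

/-- In a sequence of points of the Lorentz cone one can pass to infinitely many indices such that
each of the corresponding points lies in the minimal face of the sum of any two of them. This rests
on the proper faces of the cone being rays. -/
lemma exists_infinite_face {I : Set ℕ} (hI : I.Infinite) (y : ℕ → Fin 3 → ℝ)
    (hy : ∀ n, y n ∈ lorentzCone) :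
    ∃ J ⊆ I, J.Infinite ∧ ∀ i ∈ J, ∀ j ∈ J, ∀ k ∈ J, i ≠ j →
      ∀ᶠ ε in 𝓝[>] (0 : ℝ), y i + y j - ε • y k ∈ lorentzCone := by
  by_cases hz : (I ∩ {n | y n = 0}).Infinite
  · refine ⟨_, Set.inter_subset_left, hz, ?_⟩
    rintro i ⟨-, hi⟩ j ⟨-, hj⟩ k ⟨-, hk⟩ -
    simp only [Set.mem_ofPred_eq] at hi hj hk
    refine Eventually.of_forall fun ε => ?_
    rw [hi, hj, hk, mem_lorentzCone_iff]
    simp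
  have hI' : (I \ {n | y n = 0}).Infinite := by
    intro hf
    apply hI
    rw [← Set.inter_union_sdiff I {n | y n = 0}]
    exact (Set.not_infinite.mp hz).union hf
  have hpos : ∀ n, y n ≠ 0 → 0 < y n 2 := by
    intro n hn
    obtain ⟨h1, h2⟩ := (mem_lorentzCone_iff _).1 (hy n)
    refine h1.lt_of_ne fun h => hn ?_
    rw [← h] at h2
    have a0 : y n 0 = 0 := by nlinarith [sq_nonneg (y n 0), sq_nonneg (y n 1)]
    have a1 : y n 1 = 0 := by nlinarith [sq_nonneg (y n 0), sq_nonneg (y n 1)]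
    ext s
    fin_cases s
    · exact a0
    · exact a1
    · exact h.symm
  -- `g n` is the point where the ray through `y n` meets the unit disk at height one.
  let g : ℕ → ℝ × ℝ := fun n => (y n 0 / y n 2, y n 1 / y n 2)
  obtain ⟨J, hJ, hinf, hc⟩ := exists_infinite_const_or_injOn hI' g
  refine ⟨J, hJ.trans Set.sdiff_subset, hinf, ?_⟩
  intro i hi j hj k hk hij
  have pi := hpos i (hJ hi).2
  have pj := hpos j (hJ hj).2
  have pk := hpos k (hJ hk).2
  obtain ⟨-, qi⟩ := (mem_lorentzCone_iff _).1 (hy i)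
  obtain ⟨-, qj⟩ := (mem_lorentzCone_iff _).1 (hy j)
  rcases hc with ⟨⟨b0, b1⟩, hb⟩ | hinj
  · have key : ∀ n ∈ J, y n 0 = b0 * y n 2 ∧ y n 1 = b1 * y n 2 := by
      intro n hn
      have p := hpos n (hJ hn).2
      have := hb n hn
      simp only [g, Prod.mk.injEq] at this
      rw [← this.1, ← this.2]
      constructor <;> field_simp
    obtain ⟨ki0, ki1⟩ := key i hi
    obtain ⟨kj0, kj1⟩ := key j hj
    obtain ⟨kk0, kk1⟩ := key k hk
    have hb1 : b0 ^ 2 + b1 ^ 2 ≤ 1 := by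
      rw [ki0, ki1] at qi
      have : 0 < y i 2 ^ 2 := by positivity
      by_contra hcon
      nlinarith
    have c1 : Tendsto (fun ε : ℝ => y i 2 + y j 2 - ε * y k 2) (𝓝[>] 0)
        (𝓝 (y i 2 + y j 2 - 0 * y k 2)) :=
      (Continuous.tendsto (by fun_prop) 0).mono_left nhdsWithin_le_nhds
    have e1 := c1.eventually (lt_mem_nhds (a := 0) (by simp; linarith))
    filter_upwards [e1] with ε he
    rw [mem_lorentzCone_iff]
    simp only [Pi.sub_apply, Pi.add_apply, Pi.smul_apply, smul_eq_mul]
    refine ⟨he.le, ?_⟩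
    rw [ki0, ki1, kj0, kj1, kk0, kk1]
    nlinarith [sq_nonneg (y i 2 + y j 2 - ε * y k 2)]
  · -- Two distinct rays: their sum is interior by strict convexity of the disk.
    apply eventually_sub_mem_lorentzCone
    · simp only [Pi.add_apply]; linarith
    · have hne : g i ≠ g j := fun h => hij (hinj hi hj h)
      have hdet : 0 < (y i 0 * y j 2 - y j 0 * y i 2) ^ 2
          + (y i 1 * y j 2 - y j 1 * y i 2) ^ 2 := by
        by_contra hcon
        have z0 : y i 0 * y j 2 - y j 0 * y i 2 = 0 := by
          nlinarith [sq_nonneg (y i 0 * y j 2 - y j 0 * y i 2),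
            sq_nonneg (y i 1 * y j 2 - y j 1 * y i 2)]
        have z1 : y i 1 * y j 2 - y j 1 * y i 2 = 0 := by
          nlinarith [sq_nonneg (y i 0 * y j 2 - y j 0 * y i 2),
            sq_nonneg (y i 1 * y j 2 - y j 1 * y i 2)]
        apply hne
        simp only [g, Prod.mk.injEq]
        constructor
        · rw [div_eq_div_iff pi.ne' pj.ne']; linarith
        · rw [div_eq_div_iff pi.ne' pj.ne']; linarith
      simp only [Pi.add_apply]
      have ab : 0 < y i 2 * y j 2 := mul_pos pi pj
      have h1 : (y i 0 ^ 2 + y i 1 ^ 2) * y j 2 ^ 2 ≤ y i 2 ^ 2 * y j 2 ^ 2 :=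
        mul_le_mul_of_nonneg_right qi (sq_nonneg _)
      have h2 : (y j 0 ^ 2 + y j 1 ^ 2) * y i 2 ^ 2 ≤ y j 2 ^ 2 * y i 2 ^ 2 :=
        mul_le_mul_of_nonneg_right qj (sq_nonneg _)
      have h3 : y i 2 * y j 2 * (y i 0 * y j 0 + y i 1 * y j 1)
          < y i 2 * y j 2 * (y i 2 * y j 2) := by nlinarith
      have h4 := lt_of_mul_lt_mul_left h3 ab.le
      nlinarith

/-- A cone of psd matrices containing infinitely many rank-one matrices `v vᵀ`, with the vectors
`v` in general position, has no second-order cone representation: after passing to a subfamily,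
the lift of `vₖ vₖᵀ` lies in the minimal face of the sum of the lifts of `vᵢ vᵢᵀ` and `vⱼ vⱼᵀ`, so
that `vᵢ vᵢᵀ + vⱼ vⱼᵀ - ε vₖ vₖᵀ` is psd for some `ε > 0`, which general position forbids. -/
lemma not_isSOCR_of_family {S : Set (Matrix (Fin 3) (Fin 3) ℝ)} (hS : ∀ A ∈ S, A.PosSemidef)
    (v : ℕ → Fin 3 → ℝ) (hv : ∀ n, vecMulVec (v n) (v n) ∈ S)
    (hgen : ∀ i j k, i ≠ k → j ≠ k → ∃ w : Fin 3 → ℝ, w ⬝ᵥ v i = 0 ∧ w ⬝ᵥ v j = 0 ∧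
      w ⬝ᵥ v k ≠ 0) : ¬ IsSOCR S := by
  rintro ⟨m, -, W, f, rfl⟩
  choose y hy hfy using hv
  have hJ : ∀ T : Finset (Fin m), ∃ J : Set ℕ, J.Infinite ∧ ∀ s ∈ T, ∀ i ∈ J, ∀ j ∈ J, ∀ k ∈ J,
      i ≠ j → ∀ᶠ ε in 𝓝[>] (0 : ℝ), y i s + y j s - ε • y k s ∈ lorentzCone := by
    intro T
    induction T using Finset.induction_on with
    | empty => exact ⟨Set.univ, Set.infinite_univ, by simp⟩
    | insert s T _ ih =>
      obtain ⟨J, hJ, h⟩ := ih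
      obtain ⟨J', hJJ, hJ', h'⟩ := exists_infinite_face hJ (fun n => y n s) (fun n => (hy n).1 s)
      refine ⟨J', hJ', fun t ht i hi j hj k hk hij => ?_⟩
      rcases Finset.mem_insert.1 ht with rfl | ht
      · exact h' i hi j hj k hk hij
      · exact h t ht i (hJJ hi) j (hJJ hj) k (hJJ hk) hij
  obtain ⟨J, hJ, h⟩ := hJ Finset.univ
  obtain ⟨i, hi⟩ := hJ.nonempty
  obtain ⟨j, hj, hji⟩ := hJ.exists_notMem_finset {i}
  obtain ⟨k, hk, hkij⟩ := hJ.exists_notMem_finset {i, j}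
  simp only [Finset.mem_singleton, Finset.mem_insert, not_or] at hji hkij
  have hev : ∀ᶠ ε in 𝓝[>] (0 : ℝ), ∀ s, y i s + y j s - ε • y k s ∈ lorentzCone :=
    eventually_all.2 fun s => h s (Finset.mem_univ s) i hi j hj k hk (Ne.symm hji)
  obtain ⟨ε, hε, hpos⟩ := (hev.and self_mem_nhdsWithin).exists
  have hpsd := hS _ ⟨y i + y j - ε • y k, ⟨hε,
    W.sub_mem (W.add_mem (hy i).2 (hy j).2) (W.smul_mem ε (hy k).2)⟩, rfl⟩
  rw [map_sub, map_add, map_smul, hfy, hfy, hfy] at hpsd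
  obtain ⟨w, w1, w2, w3⟩ := hgen i j k (Ne.symm hkij.1) (Ne.symm hkij.2)
  have := hpsd.dotProduct_mulVec_nonneg w
  simp only [sub_mulVec, add_mulVec, smul_mulVec, vecMulVec_mulVec, star_trivial,
    dotProduct_sub, dotProduct_add, dotProduct_smul, w1, w2, dotProduct_comm (v i) w,
    dotProduct_comm (v j) w, dotProduct_comm (v k) w, MulOpposite.op_zero, zero_smul,
    dotProduct_zero] at this
  have h3 : 0 < (w ⬝ᵥ v k) ^ 2 := by positivity
  have hpos' : 0 < ε := hpos
  simp only [MulOpposite.smul_eq_mul_unop, MulOpposite.unop_op, smul_eq_mul] at this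
  nlinarith

/-- A cone of psd matrices containing the matrices `v vᵀ`, for `v` on a linear image of the conic
`x₀² = x₁² + x₂²`, has no second-order cone representation: no three points of a smooth conic are
collinear. -/
lemma not_isSOCR_of_conic {S : Set (Matrix (Fin 3) (Fin 3) ℝ)} (hS : ∀ A ∈ S, A.PosSemidef)
    (P : Matrix (Fin 3) (Fin 3) ℝ) (hP : IsUnit P.det)
    (hv : ∀ t : ℝ, vecMulVec (P *ᵥ ![1 + t ^ 2, 1 - t ^ 2, 2 * t])
      (P *ᵥ ![1 + t ^ 2, 1 - t ^ 2, 2 * t]) ∈ S) : ¬ IsSOCR S := by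
  refine not_isSOCR_of_family hS (fun n => P *ᵥ ![1 + (n : ℝ) ^ 2, 1 - (n : ℝ) ^ 2, 2 * (n : ℝ)])
    (fun n => hv n) ?_
  intro i j k hik hjk
  -- This functional takes the value `(t - i) (t - j)` at the point of parameter `t`.
  refine ⟨![(1 + i * j : ℝ) / 2, (i * j - 1) / 2, -(i + j) / 2] ᵥ* P⁻¹, ?_⟩
  have key : ∀ t : ℝ, (![(1 + i * j : ℝ) / 2, (i * j - 1) / 2, -(i + j) / 2] ᵥ* P⁻¹) ⬝ᵥ
      (P *ᵥ ![1 + t ^ 2, 1 - t ^ 2, 2 * t]) = (t - i) * (t - j) := by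
    intro t
    rw [← dotProduct_mulVec, mulVec_mulVec, nonsing_inv_mul _ hP, one_mulVec]
    simp [dotProduct, Fin.sum_univ_three]
    ring
  simp only [key, sub_self, zero_mul, mul_zero, true_and]
  have h1 : (k : ℝ) ≠ i := by exact_mod_cast Ne.symm hik
  have h2 : (k : ℝ) ≠ j := by exact_mod_cast Ne.symm hjk
  exact mul_ne_zero (sub_ne_zero.2 h1) (sub_ne_zero.2 h2)

/-! ### Matrices whose form splits off an orthogonal pair -/

/-- A psd matrix with vanishing `(0, 1)` entry is a sum of a psd matrix supported on the indices
`0, 2` and one supported on `1, 2`; `c` is the share of the `(2, 2)` entry given to the first. -/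
lemma exists_split {M : Matrix (Fin 3) (Fin 3) ℝ} (hM : M.PosSemidef) (h01 : M 0 1 = 0) :
    ∃ c : ℝ, 0 ≤ c ∧ c ≤ M 2 2 ∧ M 0 2 ^ 2 ≤ M 0 0 * c ∧ M 1 2 ^ 2 ≤ M 1 1 * (M 2 2 - c) := by
  have hs : ∀ i j, M j i = M i j := fun i j => by simpa using hM.1.apply i j
  have d0 : 0 ≤ M 0 0 := hM.diag_nonneg
  have d2 : 0 ≤ M 2 2 := hM.diag_nonneg
  have m02 := (hM.submatrix ![0, 2]).det_nonneg
  have m12 := (hM.submatrix ![1, 2]).det_nonneg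
  have m := hM.det_nonneg
  rw [det_fin_two] at m02 m12
  rw [det_fin_three] at m
  simp [hs 0 2] at m02
  simp [hs 1 2] at m12
  rw [hs 0 1, hs 0 2, hs 1 2, h01] at m
  rcases d0.eq_or_lt with h | h
  · rw [← h] at m02
    refine ⟨0, le_rfl, d2, by nlinarith, by nlinarith⟩
  · refine ⟨M 0 2 ^ 2 / M 0 0, by positivity, ?_, ?_, ?_⟩
    · rw [div_le_iff₀ h]; nlinarith
    · rw [mul_div_cancel₀ _ h.ne']
    · have : M 1 1 * (M 2 2 - M 0 2 ^ 2 / M 0 0)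
          = (M 1 1 * (M 2 2 * M 0 0 - M 0 2 ^ 2)) / M 0 0 := by field_simp
      rw [this, le_div_iff₀ h]
      nlinarith

/-- The parametrization of `{M : M 0 1 = 0}` by pairs of points of `ℝ³`: each point stands for a
`2 × 2` symmetric matrix, which is psd exactly when the point is in the Lorentz cone. -/
def pairMap : (Fin 2 → Fin 3 → ℝ) →ₗ[ℝ] Matrix (Fin 3) (Fin 3) ℝ where
  toFun y := !![y 0 2 + y 0 0, 0, y 0 1; 0, y 1 2 + y 1 0, y 1 1;
    y 0 1, y 1 1, (y 0 2 - y 0 0) + (y 1 2 - y 1 0)]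
  map_add' x y := by
    ext i j; fin_cases i <;> fin_cases j <;> simp <;> ring
  map_smul' c y := by
    ext i j; fin_cases i <;> fin_cases j <;> simp <;> ring

lemma binary_form_nonneg {a b c : ℝ} (h : b ^ 2 + a ^ 2 ≤ c ^ 2) (hc : 0 ≤ c) (x z : ℝ) :
    0 ≤ (c + b) * x ^ 2 + 2 * a * (x * z) + (c - b) * z ^ 2 := by
  have hb : |b| ≤ c := abs_le_of_sq_le_sq (by nlinarith [sq_nonneg a]) hc
  obtain ⟨h1, h2⟩ := abs_le.1 hb
  rcases (show 0 ≤ c + b by linarith).eq_or_lt with h0 | h0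
  · have : a = 0 := by
      have : a ^ 2 ≤ 0 := by nlinarith
      nlinarith
    rw [← h0, this]
    nlinarith [sq_nonneg z]
  · have : 0 ≤ (c + b) * ((c + b) * x ^ 2 + 2 * a * (x * z) + (c - b) * z ^ 2) := by
      nlinarith [sq_nonneg ((c + b) * x + a * z), sq_nonneg z]
    exact nonneg_of_mul_nonneg_right this h0

lemma pairMap_posSemidef {y : Fin 2 → Fin 3 → ℝ} (hy : y ∈ lorentzPow 2) :
    (pairMap y).PosSemidef := by
  obtain ⟨a1, a2⟩ := (mem_lorentzCone_iff _).1 (hy 0)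
  obtain ⟨b1, b2⟩ := (mem_lorentzCone_iff _).1 (hy 1)
  refine PosSemidef.of_dotProduct_mulVec_nonneg ?_ fun x => ?_
  · ext i j; fin_cases i <;> fin_cases j <;> simp [pairMap]
  · have h1 := binary_form_nonneg a2 a1 (x 0) (x 2)
    have h2 := binary_form_nonneg b2 b1 (x 1) (x 2)
    simp [pairMap, dotProduct, mulVec, Fin.sum_univ_three]
    nlinarith

lemma exists_pairMap_eq {M : Matrix (Fin 3) (Fin 3) ℝ} (hM : M.PosSemidef) (h01 : M 0 1 = 0) :
    ∃ y ∈ lorentzPow 2, pairMap y = M := by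
  obtain ⟨c, c0, c1, h1, h2⟩ := exists_split hM h01
  have hs : ∀ i j, M j i = M i j := fun i j => by simpa using hM.1.apply i j
  have d0 : 0 ≤ M 0 0 := hM.diag_nonneg
  have d1 : 0 ≤ M 1 1 := hM.diag_nonneg
  refine ⟨![![(M 0 0 - c) / 2, M 0 2, (M 0 0 + c) / 2],
    ![(M 1 1 - (M 2 2 - c)) / 2, M 1 2, (M 1 1 + (M 2 2 - c)) / 2]], ?_, ?_⟩
  · intro i
    rw [mem_lorentzCone_iff]
    fin_cases i
    · simp
      exact ⟨by linarith, by nlinarith⟩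
    · simp
      exact ⟨by linarith, by nlinarith⟩
  · ext i j
    fin_cases i <;> fin_cases j <;> simp [pairMap, h01, hs 0 1, hs 0 2, hs 1 2] <;> ring

/-- A slice all of whose forms make two fixed independent vectors (the first two columns of `P`)
orthogonal is second-order cone representable. -/
lemma isSOCR_of_orth {S : Set (Matrix (Fin 3) (Fin 3) ℝ)} (hS : IsSlice 3 S)
    (P : Matrix (Fin 3) (Fin 3) ℝ) (hP : IsUnit P.det) (h : ∀ A ∈ S, (Pᵀ * A * P) 0 1 = 0) :
    IsSOCR S := by
  obtain ⟨L, -, rfl⟩ := hS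
  let g : (Fin 2 → Fin 3 → ℝ) →ₗ[ℝ] Matrix (Fin 3) (Fin 3) ℝ :=
    (LinearMap.mulRight ℝ P⁻¹) ∘ₗ (LinearMap.mulLeft ℝ P⁻¹ᵀ) ∘ₗ pairMap
  have hg : ∀ y, g y = P⁻¹ᵀ * pairMap y * P⁻¹ := fun y => rfl
  refine ⟨2, two_pos, L.comap g, g, ?_⟩
  ext A
  constructor
  · intro hA
    have hpsd : (Pᵀ * A * P).PosSemidef := by
      simpa using PosSemidef.conjTranspose_mul_mul_same hA.1 P
    obtain ⟨y, hy, hyA⟩ := exists_pairMap_eq hpsd (h A hA)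
    have hgy : g y = A := by
      rw [hg, hyA]
      have e1 : P⁻¹ᵀ * Pᵀ = 1 := by rw [← transpose_mul, mul_nonsing_inv _ hP, transpose_one]
      have e2 : P * P⁻¹ = 1 := mul_nonsing_inv _ hP
      calc P⁻¹ᵀ * (Pᵀ * A * P) * P⁻¹ = (P⁻¹ᵀ * Pᵀ) * A * (P * P⁻¹) := by noncomm_ring
        _ = A := by rw [e1, e2, Matrix.one_mul, Matrix.mul_one]
    refine ⟨y, ⟨hy, ?_⟩, hgy⟩
    show g y ∈ L
    rw [hgy]
    exact hA.2
  · rintro ⟨y, ⟨hy, hyL⟩, rfl⟩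
    refine ⟨?_, hyL⟩
    show (g y).PosSemidef
    rw [hg]
    simpa using PosSemidef.conjTranspose_mul_mul_same (pairMap_posSemidef hy) P⁻¹

/-! ### Diagonalization -/

/-- Spectral theorem, with the diagonal entries listed in any prescribed order. -/
lemma exists_diag {B : Matrix (Fin 3) (Fin 3) ℝ} (hB : B.IsSymm) :
    ∃ d : Fin 3 → ℝ, ∀ σ : Equiv.Perm (Fin 3), ∃ R : Matrix (Fin 3) (Fin 3) ℝ,
      IsUnit R.det ∧ Rᵀ * R = 1 ∧ B = R * diagonal (d ∘ σ) * Rᵀ := by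
  have hH : B.IsHermitian := by
    rw [IsHermitian, conjTranspose_eq_transpose_of_trivial]; exact hB
  refine ⟨hH.eigenvalues, fun σ => ?_⟩
  let U : Matrix (Fin 3) (Fin 3) ℝ := hH.eigenvectorUnitary
  have hU : Uᵀ * U = 1 := by
    have := Unitary.coe_star_mul_self hH.eigenvectorUnitary
    rwa [star_eq_conjTranspose, conjTranspose_eq_transpose_of_trivial] at this
  have hsp : B = U * diagonal hH.eigenvalues * Uᵀ := by
    have := hH.spectral_theorem
    rw [Unitary.conjStarAlgAut_apply] at this
    rwa [star_eq_conjTranspose, conjTranspose_eq_transpose_of_trivial] at this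
  have hR : (U.submatrix id σ)ᵀ * U.submatrix id σ = 1 := by
    rw [transpose_submatrix]
    exact (submatrix_mul_equiv Uᵀ U σ (Equiv.refl _) σ).trans (by rw [hU, submatrix_one_equiv])
  refine ⟨U.submatrix id σ, ?_, hR, ?_⟩
  · exact (isUnit_iff_isUnit_det _).1 (IsUnit.of_mul_eq_one_right _ hR)
  · have : diagonal (hH.eigenvalues ∘ σ) = (diagonal hH.eigenvalues).submatrix σ σ := by
      rw [submatrix_diagonal_equiv]
    rw [this, transpose_submatrix, submatrix_mul_equiv, submatrix_mul_equiv]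
    simpa using hsp

lemma trace_mul_diag (A R : Matrix (Fin 3) (Fin 3) ℝ) (d : Fin 3 → ℝ) :
    trace (A * (R * diagonal d * Rᵀ)) = d 0 * (Rᵀ * A * R) 0 0 + d 1 * (Rᵀ * A * R) 1 1
      + d 2 * (Rᵀ * A * R) 2 2 := by
  have : trace (A * (R * diagonal d * Rᵀ)) = trace ((Rᵀ * A * R) * diagonal d) := by
    rw [show A * (R * diagonal d * Rᵀ) = (A * R * diagonal d) * Rᵀ by noncomm_ring,
      trace_mul_comm]
    congr 1
    noncomm_ring
  rw [this]
  simp [trace, Fin.sum_univ_three, mul_diagonal]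
  ring

/-- If every form in `S` is orthogonal to a fixed singular `B ≠ 0`, some two independent vectors
are orthogonal for all forms in `S`: a semidefinite `B` forces a common kernel vector, and an
indefinite one is a symmetrized product of two linear forms. -/
lemma exists_orth_of_singular {S : Set (Matrix (Fin 3) (Fin 3) ℝ)} (hS : ∀ A ∈ S, A.PosSemidef)
    {B : Matrix (Fin 3) (Fin 3) ℝ} (hB : B.IsSymm) (hB0 : B ≠ 0) (hdet : B.det = 0)
    (hSB : ∀ A ∈ S, trace (A * B) = 0) :
    ∃ P : Matrix (Fin 3) (Fin 3) ℝ, IsUnit P.det ∧ ∀ A ∈ S, (Pᵀ * A * P) 0 1 = 0 := by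
  obtain ⟨d, hd⟩ := exists_diag hB
  have hz : ∃ k, d k = 0 := by
    obtain ⟨R, hR, -, rfl⟩ := hd 1
    rw [det_mul, det_mul, det_transpose, det_diagonal, mul_eq_zero, mul_eq_zero] at hdet
    rcases hdet with (h | h) | h
    · exact absurd h hR.ne_zero
    · obtain ⟨k, -, hk⟩ := Finset.prod_eq_zero_iff.1 h
      exact ⟨k, hk⟩
    · exact absurd h hR.ne_zero
  have hnz : ∃ i, d i ≠ 0 := by
    by_contra! hall
    obtain ⟨R, hR, -, rfl⟩ := hd 1
    apply hB0
    have : d = 0 := funext hall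
    simp [this]
  obtain ⟨k, hk⟩ := hz
  obtain ⟨i, hi⟩ := hnz
  have hσ : ∃ σ : Equiv.Perm (Fin 3), σ 0 = i ∧ σ 2 = k := by
    have : i ≠ k := fun h => hi (h ▸ hk)
    clear hi hk
    revert i k
    decide
  obtain ⟨σ, rfl, rfl⟩ := hσ
  obtain ⟨R, hR, -, hBR⟩ := hd σ
  set a := d (σ 0)
  set b := d (σ 1)
  have hpsd : ∀ A ∈ S, (Rᵀ * A * R).PosSemidef := fun A hA => by
    simpa using PosSemidef.conjTranspose_mul_mul_same (hS A hA) R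
  have htr : ∀ A ∈ S, a * (Rᵀ * A * R) 0 0 + b * (Rᵀ * A * R) 1 1 = 0 := by
    intro A hA
    have := hSB A hA
    rw [hBR, trace_mul_diag] at this
    simpa [hk] using this
  rcases le_or_gt 0 (a * b) with hab | hab
  · refine ⟨R, hR, fun A hA => ?_⟩
    have hp := hpsd A hA
    have h := htr A hA
    generalize Rᵀ * A * R = M at hp h
    have d0 : 0 ≤ M 0 0 := hp.diag_nonneg
    have d1 : 0 ≤ M 1 1 := hp.diag_nonneg
    have m01 := (hp.submatrix ![0, 1]).det_nonneg
    have hs : M 1 0 = M 0 1 := by simpa using hp.1.apply 0 1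
    rw [det_fin_two] at m01
    simp [hs] at m01
    have ha : 0 < a ^ 2 := by positivity
    have h00 : a ^ 2 * M 0 0 + a * b * M 1 1 = 0 := by linear_combination a * h
    have : M 0 0 = 0 := by
      have := mul_nonneg hab d1
      nlinarith
    rw [this] at m01
    nlinarith
  · let τ := Real.sqrt (-b / a)
    have hτ0 : 0 < -b / a := by
      rw [show -b / a = -(a * b) / a ^ 2 by field_simp]
      have : 0 < a ^ 2 := by positivity
      exact div_pos (by linarith) this
    have hτ : 0 < τ := Real.sqrt_pos.2 hτ0
    have hτ2 : τ ^ 2 = -b / a := Real.sq_sqrt hτ0.le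
    let N : Matrix (Fin 3) (Fin 3) ℝ := !![1, 1, 0; τ, -τ, 0; 0, 0, 1]
    have hN : IsUnit N.det := by
      rw [isUnit_iff_ne_zero, det_fin_three]
      simp [N]
      linarith
    refine ⟨R * N, by rw [det_mul]; exact hR.mul hN, fun A hA => ?_⟩
    have hp := hpsd A hA
    have h := htr A hA
    rw [show (R * N)ᵀ * A * (R * N) = Nᵀ * (Rᵀ * A * R) * N by
      rw [transpose_mul]; noncomm_ring]
    generalize Rᵀ * A * R = M at hp h
    have hs : M 1 0 = M 0 1 := by simpa using hp.1.apply 0 1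
    have : a * τ ^ 2 = -b := by rw [hτ2]; field_simp
    simp [N, mul_apply, Fin.sum_univ_three, hs]
    apply mul_left_cancel₀ hi
    linear_combination h - M 1 1 * this

/-- A nonsingular `B` orthogonal to some nonzero psd matrix has both positive and negative
eigenvalues, so its isotropic vectors form a nonempty smooth conic and `S_B` is not socr. -/
lemma not_isSOCR_of_nonsingular {S : Set (Matrix (Fin 3) (Fin 3) ℝ)}
    (hS : ∀ A ∈ S, A.PosSemidef) {B : Matrix (Fin 3) (Fin 3) ℝ} (hB : B.IsSymm)
    (hdet : B.det ≠ 0) (hSB : sliceOrth 3 B ⊆ S) {A : Matrix (Fin 3) (Fin 3) ℝ}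
    (hA : A ∈ sliceOrth 3 B) (hA0 : A ≠ 0) : ¬ IsSOCR S := by
  obtain ⟨d, hd⟩ := exists_diag hB
  have hnz : ∀ i, d i ≠ 0 := by
    intro i hi
    obtain ⟨R, hR, -, rfl⟩ := hd 1
    apply hdet
    rw [det_mul, det_mul, det_diagonal, Finset.prod_eq_zero (Finset.mem_univ i) (by simpa using hi)]
    simp
  have hdef : ∀ s : ℝ, ¬ ((0 < s * d 0) ∧ 0 < s * d 1 ∧ 0 < s * d 2) := by
    rintro s ⟨s0, s1, s2⟩
    obtain ⟨R, hR, hRR, hBR⟩ := hd 1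
    have hpsd : (Rᵀ * A * R).PosSemidef := by
      simpa using PosSemidef.conjTranspose_mul_mul_same hA.1 R
    have htr := hA.2
    rw [hBR, trace_mul_diag] at htr
    have hT : trace (Rᵀ * A * R) = trace A := by
      rw [trace_mul_comm, ← Matrix.mul_assoc, mul_eq_one_comm.1 hRR, Matrix.one_mul]
    rw [trace, Fin.sum_univ_three] at hT
    simp only [diag_apply] at hT
    simp only [Function.comp_apply, Equiv.Perm.coe_one, id] at htr
    generalize Rᵀ * A * R = M at hpsd htr hT
    have d0 : 0 ≤ M 0 0 := hpsd.diag_nonneg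
    have d1 : 0 ≤ M 1 1 := hpsd.diag_nonneg
    have d2 : 0 ≤ M 2 2 := hpsd.diag_nonneg
    have e : s * d 0 * M 0 0 + s * d 1 * M 1 1 + s * d 2 * M 2 2 = 0 := by
      linear_combination s * htr
    have p0 := mul_nonneg s0.le d0
    have p1 := mul_nonneg s1.le d1
    have p2 := mul_nonneg s2.le d2
    have z0 : M 0 0 = 0 := by
      rcases mul_eq_zero.1 (show s * d 0 * M 0 0 = 0 by linarith) with h | h
      · exact absurd h s0.ne'
      · exact h
    have z1 : M 1 1 = 0 := by
      rcases mul_eq_zero.1 (show s * d 1 * M 1 1 = 0 by linarith) with h | h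
      · exact absurd h s1.ne'
      · exact h
    have z2 : M 2 2 = 0 := by
      rcases mul_eq_zero.1 (show s * d 2 * M 2 2 = 0 by linarith) with h | h
      · exact absurd h s2.ne'
      · exact h
    exact hA0 (hA.1.trace_eq_zero_iff.1 (by linarith))
  have hσ : ∃ σ : Equiv.Perm (Fin 3), ∃ s : ℝ, (s = 1 ∨ s = -1) ∧ 0 < s * d (σ 0) ∧
      s * d (σ 1) < 0 ∧ s * d (σ 2) < 0 := by
    have hp := hdef 1
    have hm := hdef (-1)
    simp only [one_mul, neg_mul, Left.neg_pos_iff] at hp hm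
    have s01 : Equiv.swap (0 : Fin 3) 1 2 = 2 := by decide
    have s02 : Equiv.swap (0 : Fin 3) 2 1 = 1 := by decide
    rcases (hnz 0).lt_or_gt with h0 | h0 <;> rcases (hnz 1).lt_or_gt with h1 | h1 <;>
      rcases (hnz 2).lt_or_gt with h2 | h2
    · exact absurd ⟨h0, h1, h2⟩ hm
    · exact ⟨Equiv.swap 0 2, 1, Or.inl rfl, by simp [s02, h0, h1, h2]⟩
    · exact ⟨Equiv.swap 0 1, 1, Or.inl rfl, by simp [s01, h0, h1, h2]⟩
    · exact ⟨1, -1, Or.inr rfl, by simp [h0, h1, h2]⟩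
    · exact ⟨1, 1, Or.inl rfl, by simp [h0, h1, h2]⟩
    · exact ⟨Equiv.swap 0 1, -1, Or.inr rfl, by simp [s01, h0, h1, h2]⟩
    · exact ⟨Equiv.swap 0 2, -1, Or.inr rfl, by simp [s02, h0, h1, h2]⟩
    · exact absurd ⟨h0, h1, h2⟩ hp
  obtain ⟨σ, s, hs, p0, p1, p2⟩ := hσ
  obtain ⟨R, hR, hRR, hBR⟩ := hd σ
  let e : Fin 3 → ℝ := fun i => (Real.sqrt |d (σ i)|)⁻¹
  have he : ∀ i, 0 < e i := fun i => by
    have := abs_pos.2 (hnz (σ i))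
    positivity
  have he2 : ∀ i, e i ^ 2 * |d (σ i)| = 1 := fun i => by
    have := abs_pos.2 (hnz (σ i))
    simp only [e, inv_pow, Real.sq_sqrt this.le]
    field_simp
  refine not_isSOCR_of_conic hS (R * diagonal e) ?_ fun t => hSB ⟨?_, ?_⟩
  · rw [det_mul, det_diagonal]
    refine hR.mul (isUnit_iff_ne_zero.2 (Finset.prod_ne_zero_iff.2 fun i _ => (he i).ne'))
  · simpa using posSemidef_vecMulVec_self_star (R := ℝ)
      ((R * diagonal e) *ᵥ ![1 + t ^ 2, 1 - t ^ 2, 2 * t])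
  · rw [hBR, trace_mul_diag]
    have hx : Rᵀ * vecMulVec ((R * diagonal e) *ᵥ ![1 + t ^ 2, 1 - t ^ 2, 2 * t])
        ((R * diagonal e) *ᵥ ![1 + t ^ 2, 1 - t ^ 2, 2 * t]) * R
        = vecMulVec (diagonal e *ᵥ ![1 + t ^ 2, 1 - t ^ 2, 2 * t])
        (diagonal e *ᵥ ![1 + t ^ 2, 1 - t ^ 2, 2 * t]) := by
      rw [mul_vecMulVec, vecMulVec_mul, ← mulVec_transpose, mulVec_mulVec, ← Matrix.mul_assoc, hRR,
        Matrix.one_mul]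
    rw [hx]
    have k0 := he2 0
    have k1 := he2 1
    have k2 := he2 2
    simp only [vecMulVec_apply, mulVec_diagonal, Function.comp_apply, cons_val]
    rcases hs with rfl | rfl
    · rw [abs_of_pos (by linarith)] at k0
      rw [abs_of_neg (by linarith)] at k1 k2
      linear_combination (1 + t ^ 2) ^ 2 * k0 - (1 - t ^ 2) ^ 2 * k1 - (2 * t) ^ 2 * k2
    · rw [abs_of_neg (by linarith)] at k0
      rw [abs_of_pos (by linarith)] at k1 k2
      linear_combination -(1 + t ^ 2) ^ 2 * k0 + (1 - t ^ 2) ^ 2 * k1 + (2 * t) ^ 2 * k2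

/-! ### Orthogonal complements in the space of symmetric matrices -/

/-- The six-dimensional space of real symmetric `3 × 3` matrices. -/
def symSub : Submodule ℝ (Matrix (Fin 3) (Fin 3) ℝ) where
  carrier := {A | A.IsSymm}
  add_mem' ha hb := IsSymm.add ha hb
  zero_mem' := isSymm_zero
  smul_mem' c _ ha := IsSymm.smul ha c

lemma mem_symSub {A : Matrix (Fin 3) (Fin 3) ℝ} : A ∈ symSub ↔ A.IsSymm := Iff.rfl

lemma finrank_symSub : Module.finrank ℝ symSub = 6 := by
  let e : symSub ≃ₗ[ℝ] (Fin 6 → ℝ) :=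
    { toFun := fun A => ![A.1 0 0, A.1 1 1, A.1 2 2, A.1 0 1, A.1 0 2, A.1 1 2]
      invFun := fun x => ⟨!![x 0, x 3, x 4; x 3, x 1, x 5; x 4, x 5, x 2], by
        rw [mem_symSub]; ext i j; fin_cases i <;> fin_cases j <;> rfl⟩
      map_add' := fun A B => by ext i; fin_cases i <;> rfl
      map_smul' := fun c A => by ext i; fin_cases i <;> rfl
      left_inv := fun A => by
        have hs : ∀ i j, A.1 j i = A.1 i j := fun i j => (mem_symSub.1 A.2).apply i j
        apply Subtype.ext
        ext i j
        fin_cases i <;> fin_cases j <;> simp [hs 0 1, hs 0 2, hs 1 2]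
      right_inv := fun x => by ext i; fin_cases i <;> rfl }
  rw [e.finrank_eq]
  simp

/-- The symmetric matrices, as functionals on `K` through the trace form. -/
def traceDual (K : Submodule ℝ (Matrix (Fin 3) (Fin 3) ℝ)) : symSub →ₗ[ℝ] Module.Dual ℝ K where
  toFun B :=
    { toFun := fun A => trace (A.1 * B.1)
      map_add' := fun x y => by simp [Matrix.add_mul]
      map_smul' := fun c x => by simp }
  map_add' x y := by ext A; simp [Matrix.mul_add]
  map_smul' c x := by ext A; simp

lemma finrank_ker_traceDual (K : Submodule ℝ (Matrix (Fin 3) (Fin 3) ℝ)) :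
    6 ≤ Module.finrank ℝ K + Module.finrank ℝ (LinearMap.ker (traceDual K)) := by
  have h := (traceDual K).finrank_range_add_finrank_ker
  have h2 := (LinearMap.range (traceDual K)).finrank_le
  rw [Subspace.dual_finrank_eq] at h2
  rw [finrank_symSub] at h
  omega

lemma mem_ker_traceDual {K : Submodule ℝ (Matrix (Fin 3) (Fin 3) ℝ)} {B : symSub} :
    B ∈ LinearMap.ker (traceDual K) ↔ ∀ A ∈ K, trace (A * B.1) = 0 := by
  rw [LinearMap.mem_ker]
  constructor
  · intro h A hA
    exact LinearMap.congr_fun h ⟨A, hA⟩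
  · intro h
    ext A
    exact h A.1 A.2

lemma exists_cubic_root (a b c d : ℝ) (hd : d ≠ 0) :
    ∃ t : ℝ, a + b * t + c * t ^ 2 + d * t ^ 3 = 0 := by
  have main : ∀ a b c : ℝ, ∃ t : ℝ, a + b * t + c * t ^ 2 + t ^ 3 = 0 := by
    intro a b c
    let M := 1 + |a| + |b| + |c|
    have hM : 1 ≤ M := by
      have := abs_nonneg a; have := abs_nonneg b; have := abs_nonneg c
      simp only [M]; linarith
    have hM2 : M ≤ M ^ 2 := by nlinarith
    have hM1 : 1 ≤ M ^ 2 := by nlinarith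
    have ha := abs_le.1 (le_refl |a|)
    have hb := abs_le.1 (le_refl |b|)
    have hc := abs_le.1 (le_refl |c|)
    have hM3 : M ^ 3 = M ^ 2 + |a| * M ^ 2 + |b| * M ^ 2 + |c| * M ^ 2 := by
      simp only [M]; ring
    have a1 : |a| ≤ |a| * M ^ 2 := le_mul_of_one_le_right (abs_nonneg a) hM1
    have b1 : |b| * M ≤ |b| * M ^ 2 := mul_le_mul_of_nonneg_left hM2 (abs_nonneg b)
    have b2 : -(|b| * M) ≤ b * M := by nlinarith
    have b3 : b * M ≤ |b| * M := by nlinarith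
    have c2 : -(|c| * M ^ 2) ≤ c * M ^ 2 := by nlinarith
    have c3 : c * M ^ 2 ≤ |c| * M ^ 2 := by nlinarith
    have hcont : ContinuousOn (fun t : ℝ => a + b * t + c * t ^ 2 + t ^ 3) (Set.Icc (-M) M) :=
      Continuous.continuousOn (by fun_prop)
    have h0 := intermediate_value_Icc (by linarith : -M ≤ M) hcont
    obtain ⟨t, -, ht⟩ := h0 (show (0 : ℝ) ∈ Set.Icc _ _ from
      ⟨by nlinarith, by nlinarith⟩)
    exact ⟨t, ht⟩
  obtain ⟨t, ht⟩ := main (a / d) (b / d) (c / d)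
  refine ⟨t, ?_⟩
  field_simp at ht
  linarith

/-- A space of symmetric matrices of dimension at most four is orthogonal to a singular `B ≠ 0`:
its orthogonal complement contains a pencil, on which the determinant is a binary cubic. -/
lemma exists_singular_orth {K : Submodule ℝ (Matrix (Fin 3) (Fin 3) ℝ)}
    (hK : Module.finrank ℝ K ≤ 4) :
    ∃ B : Matrix (Fin 3) (Fin 3) ℝ, B.IsSymm ∧ B ≠ 0 ∧ B.det = 0 ∧
      ∀ A ∈ K, trace (A * B) = 0 := by
  have h := finrank_ker_traceDual K
  have h2 : 1 < Module.finrank ℝ (LinearMap.ker (traceDual K)) := by omega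
  obtain ⟨C, hC⟩ := (Module.finrank_pos_iff_exists_ne_zero (R := ℝ)
    (M := LinearMap.ker (traceDual K))).1 (zero_lt_one.trans h2)
  obtain ⟨D, hD⟩ := exists_linearIndependent_pair_of_one_lt_finrank h2 hC
  have hDz : D ≠ 0 := hD.ne_zero 1
  have hval : ∀ E : LinearMap.ker (traceDual K), E ≠ 0 → E.1.1.det = 0 →
      ∃ B : Matrix (Fin 3) (Fin 3) ℝ, B.IsSymm ∧ B ≠ 0 ∧ B.det = 0 ∧
        ∀ A ∈ K, trace (A * B) = 0 := fun E hE hdet =>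
    ⟨E.1.1, E.1.2, fun h => hE (Subtype.ext (Subtype.ext h)), hdet, mem_ker_traceDual.1 E.2⟩
  by_cases hdet : D.1.1.det = 0
  · exact hval D hDz hdet
  have hpoly : ∃ a b c : ℝ, ∀ t : ℝ, (C.1.1 + t • D.1.1).det
      = a + b * t + c * t ^ 2 + D.1.1.det * t ^ 3 := by
    generalize C.1.1 = X
    generalize D.1.1 = Y
    refine ⟨X.det,
      X 0 0 * X 1 1 * Y 2 2 + X 0 0 * Y 1 1 * X 2 2 + Y 0 0 * X 1 1 * X 2 2
      - (X 0 0 * X 1 2 * Y 2 1 + X 0 0 * Y 1 2 * X 2 1 + Y 0 0 * X 1 2 * X 2 1)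
      - (X 0 1 * X 1 0 * Y 2 2 + X 0 1 * Y 1 0 * X 2 2 + Y 0 1 * X 1 0 * X 2 2)
      + (X 0 1 * X 1 2 * Y 2 0 + X 0 1 * Y 1 2 * X 2 0 + Y 0 1 * X 1 2 * X 2 0)
      + (X 0 2 * X 1 0 * Y 2 1 + X 0 2 * Y 1 0 * X 2 1 + Y 0 2 * X 1 0 * X 2 1)
      - (X 0 2 * X 1 1 * Y 2 0 + X 0 2 * Y 1 1 * X 2 0 + Y 0 2 * X 1 1 * X 2 0),
      Y 0 0 * Y 1 1 * X 2 2 + Y 0 0 * X 1 1 * Y 2 2 + X 0 0 * Y 1 1 * Y 2 2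
      - (Y 0 0 * Y 1 2 * X 2 1 + Y 0 0 * X 1 2 * Y 2 1 + X 0 0 * Y 1 2 * Y 2 1)
      - (Y 0 1 * Y 1 0 * X 2 2 + Y 0 1 * X 1 0 * Y 2 2 + X 0 1 * Y 1 0 * Y 2 2)
      + (Y 0 1 * Y 1 2 * X 2 0 + Y 0 1 * X 1 2 * Y 2 0 + X 0 1 * Y 1 2 * Y 2 0)
      + (Y 0 2 * Y 1 0 * X 2 1 + Y 0 2 * X 1 0 * Y 2 1 + X 0 2 * Y 1 0 * Y 2 1)
      - (Y 0 2 * Y 1 1 * X 2 0 + Y 0 2 * X 1 1 * Y 2 0 + X 0 2 * Y 1 1 * Y 2 0), fun t => ?_⟩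
    simp only [det_fin_three, Matrix.add_apply, Matrix.smul_apply, smul_eq_mul]
    ring
  obtain ⟨a, b, c, hp⟩ := hpoly
  obtain ⟨t, ht⟩ := exists_cubic_root a b c _ hdet
  refine hval (C + t • D) (fun h0 => ?_) ((hp t).trans ht)
  have := LinearIndependent.pair_iff.1 hD 1 t (by simpa using h0)
  exact one_ne_zero this.1

/-- A slice `S` of `S₊³` is second-order cone representable if and only if
`dim S ≤ 4` or `S = S_B` for some nonzero symmetric `B` with `det B = 0`. -/
theorem socr_slice_iff (S : Set (Matrix (Fin 3) (Fin 3) ℝ)) (hS : IsSlice 3 S) :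
    IsSOCR S ↔
      Module.finrank ℝ (Submodule.span ℝ S) ≤ 4 ∨
        ∃ B : Matrix (Fin 3) (Fin 3) ℝ,
          B.IsSymm ∧ B ≠ 0 ∧ B.det = 0 ∧ S = sliceOrth 3 B := by
  have hpsd : ∀ A ∈ S, A.PosSemidef := by
    obtain ⟨L, -, rfl⟩ := hS
    exact fun A hA => hA.1
  constructor
  · intro hsoc
    by_contra! hcon
    obtain ⟨hdim, hB⟩ := hcon
    have hspan : Submodule.span ℝ S ≤ symSub := by
      obtain ⟨L, hL, rfl⟩ := hS
      exact Submodule.span_le.2 fun A hA => hL A hA.2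
    have hmem : ∀ A : Matrix (Fin 3) (Fin 3) ℝ, A.PosSemidef → A ∈ Submodule.span ℝ S → A ∈ S := by
      obtain ⟨L, hL, rfl⟩ := hS
      exact fun A hA hA' => ⟨hA, Submodule.span_le.2 (fun X hX => hX.2) hA'⟩
    have hsymm : ∀ A : Matrix (Fin 3) (Fin 3) ℝ, A.PosSemidef → A ∈ symSub := fun A hA => by
      have := hA.1
      rwa [IsHermitian, conjTranspose_eq_transpose_of_trivial] at this
    by_cases h6 : 6 ≤ Module.finrank ℝ (Submodule.span ℝ S)
    · have htop : Submodule.span ℝ S = symSub :=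
        Submodule.eq_of_le_of_finrank_le hspan (by rw [finrank_symSub]; exact h6)
      have hall : ∀ A : Matrix (Fin 3) (Fin 3) ℝ, A.PosSemidef → A ∈ S := fun A hA =>
        hmem A hA (htop ▸ hsymm A hA)
      refine not_isSOCR_of_conic hpsd 1 (by simp) (fun t => hall _ ?_) hsoc
      simpa using posSemidef_vecMulVec_self_star (R := ℝ) ![1 + t ^ 2, 1 - t ^ 2, 2 * t]
    · have h1 := finrank_ker_traceDual (Submodule.span ℝ S)
      obtain ⟨⟨B, hBK⟩, hB0⟩ := (Module.finrank_pos_iff_exists_ne_zero (R := ℝ)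
        (M := LinearMap.ker (traceDual (Submodule.span ℝ S)))).1 (by omega)
      have hBne : B.1 ≠ 0 := fun h => hB0 (Subtype.ext (Subtype.ext h))
      have horth := mem_ker_traceDual.1 hBK
      let φ : Matrix (Fin 3) (Fin 3) ℝ →ₗ[ℝ] ℝ :=
        (traceLinearMap (Fin 3) ℝ ℝ) ∘ₗ LinearMap.mulRight ℝ B.1
      have hφ : ∀ A, φ A = trace (A * B.1) := fun A => rfl
      have hlt : symSub ⊓ LinearMap.ker φ < symSub := by
        refine inf_le_left.lt_of_ne fun h => hBne ?_
        have hmemB : B.1 ∈ symSub ⊓ LinearMap.ker φ := h.symm ▸ B.2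
        have hz : trace (B.1 * B.1) = 0 := hmemB.2
        rw [← trace_conjTranspose_mul_self_eq_zero_iff, conjTranspose_eq_transpose_of_trivial,
          (mem_symSub.1 B.2).eq]
        exact hz
      have hfl := Submodule.finrank_lt_finrank_of_lt hlt
      rw [finrank_symSub] at hfl
      have heq : Submodule.span ℝ S = symSub ⊓ LinearMap.ker φ :=
        Submodule.eq_of_le_of_finrank_le (fun A hA => ⟨hspan hA, horth A hA⟩) (by omega)
      have hSB : S = sliceOrth 3 B.1 := by
        ext A
        exact ⟨fun hA => ⟨hpsd A hA, horth A (Submodule.subset_span hA)⟩,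
          fun hA => hmem A hA.1 (heq ▸ ⟨hsymm A hA.1, hA.2⟩)⟩
      have hdet : B.1.det ≠ 0 := fun h => hB B.1 B.2 hBne h hSB
      have hne : ∃ A ∈ S, A ≠ 0 := by
        by_contra! hall
        have : Submodule.span ℝ S = ⊥ := Submodule.span_eq_bot.2 hall
        rw [this, finrank_bot] at hdim
        omega
      obtain ⟨A, hA, hA0⟩ := hne
      exact not_isSOCR_of_nonsingular hpsd B.2 hdet hSB.ge (hSB ▸ hA) hA0 hsoc
  · intro h
    have hB : ∃ B : Matrix (Fin 3) (Fin 3) ℝ, B.IsSymm ∧ B ≠ 0 ∧ B.det = 0 ∧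
        ∀ A ∈ S, trace (A * B) = 0 := by
      rcases h with h | ⟨B, h1, h2, h3, h4⟩
      · obtain ⟨B, h1, h2, h3, h4⟩ := exists_singular_orth h
        exact ⟨B, h1, h2, h3, fun A hA => h4 A (Submodule.subset_span hA)⟩
      · exact ⟨B, h1, h2, h3, fun A hA => (h4 ▸ hA : A ∈ sliceOrth 3 B).2⟩
    obtain ⟨B, h1, h2, h3, h4⟩ := hB
    obtain ⟨P, hP, hSP⟩ := exists_orth_of_singular hpsd h1 h2 h3 h4
    exact isSOCR_of_orth hS P hP hSP
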